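/- For every τ in the complex upper half-plane ℍ, one has Δ(2τ)/Δ(4τ) = h(τ)² − 64, where Δ(τ) = η(τ)²⁴. -/

import Mathlib

noncomputable section
open Complex Real

/-- `q = e^{2πiτ}`. -/
def nome (τ : ℂ) : ℂ := Complex.exp (2 * (π : ℂ) * I * τ)

/-- Dedekind eta function `η(τ) = e^{πiτ/12} ∏_{n≥1} (1 − qⁿ)`. -/
def dedekindEta (τ : ℂ) : ℂ :=
  Complex.exp ((π : ℂ) * I * τ / 12) * ∏' n : ℕ, (1 - nome τ ^ (n + 1))

/-- Sum of the positive odd divisors of `n`. -/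
def sigmaOdd (n : ℕ) : ℕ := ∑ d ∈ n.divisors.filter (fun d => Odd d), d

/-- `E*(τ) = 1 + 24 Σ_{n≥1} σ_odd(n) qⁿ`. -/
def Estar (τ : ℂ) : ℂ := 1 + 24 * ∑' n : ℕ, (sigmaOdd (n + 1) : ℂ) * nome τ ^ (n + 1)

/-- `h(τ) = (η(2τ)⁴/η(4τ)⁸)·E*(2τ)`. -/
def hfun (τ : ℂ) : ℂ := dedekindEta (2 * τ) ^ 4 / dedekindEta (4 * τ) ^ 8 * Estar (2 * τ)

/-!
The theorem is the identity `E*(z)² = η(z)¹⁶ / η(2z)⁸ + 64 η(2z)¹⁶ / η(z)⁸`, taken at `z = 2τ` and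
multiplied by `η(2τ)⁸ / η(4τ)¹⁶`. Let `F` be the difference of its two sides. By the transformation
laws of `E₂` and `η`, it is invariant in weight 4 under `z ↦ z + 1` and under the Fricke involution
`z ↦ -1 / (2z)`, and it is `O(q)` at `i∞`. Its norm `F(z) F(z / 2) F((z + 1) / 2)` is therefore a
modular form of level one and weight 12 which is `O(q²)`; since `Δ = q + O(q²)` has no zero,
dividing twice by `Δ` leaves a form of negative weight, so the norm vanishes. By the identity
theorem one of its three factors, and hence `F`, vanishes.
-/

open scoped ArithmeticFunction.sigma MatrixGroups ModularForm
open UpperHalfPlane hiding I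
open EisensteinSeries Filter Asymptotics Topology

section Coefficients

lemma sigmaOdd_le_sigma_one (n : ℕ) : sigmaOdd n ≤ σ 1 n := by
  rw [ArithmeticFunction.sigma_one_apply]
  exact Finset.sum_le_sum_of_subset (Finset.filter_subset _ _)

lemma sigmaOdd_eq_sigma_one_of_odd {n : ℕ} (hn : Odd n) : sigmaOdd n = σ 1 n := by
  rw [ArithmeticFunction.sigma_one_apply, sigmaOdd, Finset.filter_true_of_mem]
  exact fun d hd ↦ hn.of_dvd_nat (Nat.dvd_of_mem_divisors hd)

lemma filter_not_odd_divisors_two_mul (n : ℕ) :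
    (2 * n).divisors.filter (fun d ↦ ¬Odd d) = n.divisors.image (2 * ·) := by
  ext d
  simp only [Finset.mem_filter, Finset.mem_image, Nat.mem_divisors, Nat.not_odd_iff_even]
  constructor
  · rintro ⟨⟨hd, hn⟩, hd_even⟩
    obtain ⟨c, rfl⟩ := hd_even.two_dvd
    exact ⟨c, ⟨Nat.dvd_of_mul_dvd_mul_left two_pos hd, by lia⟩, rfl⟩
  · rintro ⟨c, ⟨hc, hn⟩, rfl⟩
    exact ⟨⟨mul_dvd_mul_left 2 hc, by lia⟩, even_two_mul c⟩

lemma sigmaOdd_two_mul_add (n : ℕ) : sigmaOdd (2 * n) + 2 * σ 1 n = σ 1 (2 * n) := by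
  rw [ArithmeticFunction.sigma_one_apply, ArithmeticFunction.sigma_one_apply, sigmaOdd,
    ← Finset.sum_filter_add_sum_filter_not (2 * n).divisors (fun d ↦ Odd d),
    filter_not_odd_divisors_two_mul, Finset.sum_image (mul_right_injective₀ two_ne_zero).injOn,
    Finset.mul_sum]

lemma norm_sigma_le (k n : ℕ) : ‖(σ k n : ℂ)‖ ≤ (n : ℝ) ^ (k + 1) := by
  rw [Complex.norm_natCast]
  exact_mod_cast ArithmeticFunction.sigma_le_pow_succ k n

lemma norm_sigmaOdd_le (n : ℕ) : ‖(sigmaOdd n : ℂ)‖ ≤ (n : ℝ) ^ 2 := by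
  rw [Complex.norm_natCast]
  exact_mod_cast (sigmaOdd_le_sigma_one n).trans (ArithmeticFunction.sigma_le_pow_succ 1 n)

end Coefficients

section PowerSeries

variable {c : ℕ → ℂ} {k : ℕ} {q : ℂ}

lemma norm_sq_lt_one (hq : ‖q‖ < 1) : ‖q ^ 2‖ < 1 := by
  rw [norm_pow]
  exact pow_lt_one₀ (norm_nonneg _) hq two_ne_zero

lemma summable_mul_pow_of_norm_le_pow (hc : ∀ n, ‖c n‖ ≤ (n : ℝ) ^ k) (hq : ‖q‖ < 1) :
    Summable fun n ↦ c n * q ^ n := by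
  refine .of_norm_bounded (summable_norm_pow_mul_geometric_of_norm_lt_one k hq) fun n ↦ ?_
  simp only [norm_mul, norm_pow, Complex.norm_natCast]
  gcongr
  exact hc n

lemma differentiableOn_tsum_mul_pow (hc : ∀ n, ‖c n‖ ≤ (n : ℝ) ^ k) :
    DifferentiableOn ℂ (fun q ↦ ∑' n, c n * q ^ n) (Metric.ball 0 1) := by
  intro q hq
  obtain ⟨r, hqr, hr⟩ := exists_between (mem_ball_zero_iff.mp hq)
  have hr₀ : 0 ≤ r := (norm_nonneg q).trans hqr.le
  have hsum : Summable fun n : ℕ ↦ (n : ℝ) ^ k * r ^ n :=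
    summable_pow_mul_geometric_of_norm_lt_one k (by rwa [Real.norm_of_nonneg hr₀])
  have hdiff : DifferentiableOn ℂ (fun q ↦ ∑' n, c n * q ^ n) (Metric.ball 0 r) := by
    refine Complex.differentiableOn_tsum_of_summable_norm hsum (fun n ↦ by fun_prop)
      Metric.isOpen_ball fun n w hw ↦ ?_
    rw [norm_mul, norm_pow]
    gcongr
    exacts [hc n, (mem_ball_zero_iff.mp hw).le]
  exact (hdiff.differentiableAt <| Metric.isOpen_ball.mem_nhds
    (mem_ball_zero_iff.mpr hqr)).differentiableWithinAt

lemma tsum_mul_pow_even_add_odd (hc : Summable fun n ↦ c n * q ^ n) :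
    ∑' n, c (2 * n) * (q ^ 2) ^ n + q * ∑' n, c (2 * n + 1) * (q ^ 2) ^ n =
      ∑' n, c n * q ^ n := by
  have inj_even : Function.Injective fun n : ℕ ↦ 2 * n := mul_right_injective₀ two_ne_zero
  have inj_odd : Function.Injective fun n : ℕ ↦ 2 * n + 1 :=
    (add_left_injective 1).comp inj_even
  rw [← tsum_even_add_odd (f := fun n ↦ c n * q ^ n) (hc.comp_injective inj_even)
    (hc.comp_injective inj_odd), ← tsum_mul_left]
  congr 1 <;> exact tsum_congr fun n ↦ by ring

lemma tsum_sigmaOdd_mul_pow (hq : ‖q‖ < 1) :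
    ∑' n, (sigmaOdd n : ℂ) * q ^ n =
      ∑' n, (σ 1 n : ℂ) * q ^ n - 2 * ∑' n, (σ 1 n : ℂ) * (q ^ 2) ^ n := by
  have hσ := summable_mul_pow_of_norm_le_pow (norm_sigma_le 1) (norm_sq_lt_one hq)
  have hσ_even : Summable fun n ↦ (sigmaOdd (2 * n) : ℂ) * (q ^ 2) ^ n := by
    refine ((summable_mul_pow_of_norm_le_pow norm_sigmaOdd_le hq).comp_injective
      (mul_right_injective₀ two_ne_zero)).congr fun n ↦ ?_
    rw [Function.comp_apply, pow_mul]
  have even_part : ∑' n, (σ 1 (2 * n) : ℂ) * (q ^ 2) ^ n =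
      ∑' n, (sigmaOdd (2 * n) : ℂ) * (q ^ 2) ^ n + 2 * ∑' n, (σ 1 n : ℂ) * (q ^ 2) ^ n := by
    rw [← tsum_mul_left, ← hσ_even.tsum_add (hσ.mul_left 2)]
    refine tsum_congr fun n ↦ ?_
    rw [← sigmaOdd_two_mul_add n]
    push_cast
    ring
  rw [← tsum_mul_pow_even_add_odd (summable_mul_pow_of_norm_le_pow norm_sigmaOdd_le hq),
    ← tsum_mul_pow_even_add_odd (summable_mul_pow_of_norm_le_pow (norm_sigma_le 1) hq), even_part]
  simp only [sigmaOdd_eq_sigma_one_of_odd (odd_two_mul_add_one _)]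
  ring

end PowerSeries

section UpperHalfPlane

variable {z : ℂ}

lemma ne_zero_of_im_pos (hz : 0 < z.im) : z ≠ 0 := by
  rintro rfl
  simp at hz

lemma im_neg_one_div_pos (hz : 0 < z.im) : 0 < (-1 / z).im := by
  simpa only [neg_div, one_div, inv_neg, coe_mk] using im_inv_neg_coe_pos ⟨z, hz⟩

lemma isPreconnected_upperHalfPlaneSet : IsPreconnected upperHalfPlaneSet :=
  (convex_halfSpace_im_gt 0).isPreconnected

end UpperHalfPlane

section Nome

variable {z : ℂ} {f : ℂ → ℂ}

lemma nome_add_one (z : ℂ) : nome (z + 1) = nome z := by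
  rw [nome, nome, mul_add, mul_one, Complex.exp_add, Complex.exp_two_pi_mul_I, mul_one]

lemma nome_two_mul (z : ℂ) : nome (2 * z) = nome z ^ 2 := by
  rw [nome, nome, ← Complex.exp_nat_mul]
  push_cast
  ring_nf

lemma nome_div_two_mul_nome_add_one_div_two (z : ℂ) :
    nome (z / 2) * nome ((z + 1) / 2) = -nome z := by
  rw [nome, nome, nome, ← Complex.exp_add, ← mul_neg_one, ← Complex.exp_pi_mul_I,
    ← Complex.exp_add]
  ring_nf

lemma nome_ne_zero (z : ℂ) : nome z ≠ 0 := Complex.exp_ne_zero _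

lemma norm_nome (z : ℂ) : ‖nome z‖ = Real.exp (-2 * π * z.im) := by
  simp [nome, Complex.norm_exp]

lemma norm_nome_lt_one (hz : 0 < z.im) : ‖nome z‖ < 1 := by
  rw [norm_nome, Real.exp_lt_one_iff]
  nlinarith [Real.pi_pos]

lemma tendsto_nome : Tendsto nome (comap Complex.im atTop) (𝓝 0) := by
  rw [tendsto_zero_iff_norm_tendsto_zero]
  simp only [norm_nome]
  exact Real.tendsto_exp_atBot.comp
    (tendsto_comap.const_mul_atTop_of_neg (by linarith [Real.pi_pos]))

lemma differentiableOn_comp_nome (hf : DifferentiableOn ℂ f (Metric.ball 0 1)) :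
    DifferentiableOn ℂ (fun z ↦ f (nome z)) upperHalfPlaneSet := by
  refine hf.comp ?_ fun z hz ↦ mem_ball_zero_iff.mpr (norm_nome_lt_one hz)
  unfold nome
  fun_prop

lemma isBigO_comp_nome (hf : DifferentiableAt ℂ f 0) (hf₀ : f 0 = 0) :
    (fun z ↦ f (nome z)) =O[comap Complex.im atTop] nome := by
  have hO : f =O[𝓝 0] fun q ↦ q := by simpa only [hf₀, sub_zero] using hf.isBigO_sub
  exact hO.comp_tendsto tendsto_nome

end Nome

section EisensteinSeries

lemma E2_eq_tsum_nome (z : ℍ) : E2 z = 1 - 24 * ∑' n, (σ 1 n : ℂ) * nome z ^ n := by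
  rw [E2_eq_tsum_cexp]
  congr 2
  exact tsum_pnat_eq_tsum_of_eq_zero (f := fun n ↦ (σ 1 n : ℂ) * nome z ^ n) (by simp)

lemma Estar_eq_tsum_nome (z : ℂ) : Estar z = 1 + 24 * ∑' n, (sigmaOdd n : ℂ) * nome z ^ n := by
  rw [Estar, ← tsum_pnat_eq_tsum_succ (f := fun n ↦ (sigmaOdd n : ℂ) * nome z ^ n),
    tsum_pnat_eq_tsum_of_eq_zero (f := fun n ↦ (sigmaOdd n : ℂ) * nome z ^ n) (by simp [sigmaOdd])]

lemma Estar_eq_two_mul_E2_sub_E2 {z w : ℍ} (hw : (w : ℂ) = 2 * z) :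
    Estar z = 2 * E2 w - E2 z := by
  rw [Estar_eq_tsum_nome, E2_eq_tsum_nome, E2_eq_tsum_nome,
    tsum_sigmaOdd_mul_pow (norm_nome_lt_one z.im_pos), hw, nome_two_mul]
  ring

lemma E2_neg_one_div {z w : ℍ} (hw : (w : ℂ) = -1 / z) :
    E2 w = z ^ 2 * E2 z - 6 * I * z / π := by
  have hS : ModularGroup.S • z = w := by
    ext
    rw [modular_S_smul, hw, coe_mk, inv_neg, neg_div, one_div]
  have hE2 := congrFun (E2_slash_action ModularGroup.S) z
  rw [ModularForm.SL_slash_apply, hS, ModularGroup.denom_S, zpow_neg,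
    mul_inv_eq_iff_eq_mul₀ (zpow_ne_zero _ z.ne_zero)] at hE2
  simp only [Pi.sub_apply, Pi.smul_apply, D2_S, riemannZeta_two, smul_eq_mul] at hE2
  have hz := z.ne_zero
  have hπ : (π : ℂ) ≠ 0 := ofReal_ne_zero.mpr Real.pi_ne_zero
  rw [hE2]
  norm_cast
  push_cast
  field_simp

lemma Estar_neg_one_div_two_mul {z : ℂ} (hz : 0 < z.im) :
    Estar (-1 / (2 * z)) = -(2 * z ^ 2) * Estar z := by
  have hz₂ : 0 < (2 * z).im := by simpa using hz
  let Z : ℍ := ⟨z, hz⟩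
  let twoZ : ℍ := ⟨2 * z, hz₂⟩
  let W : ℍ := ⟨-1 / (2 * z), im_neg_one_div_pos hz₂⟩
  let twoW : ℍ := ⟨-1 / z, im_neg_one_div_pos hz⟩
  have hz₀ := ne_zero_of_im_pos hz
  have htwoW : (twoW : ℂ) = 2 * W := by
    simp only [twoW, W]
    field_simp
  calc Estar W = 2 * E2 twoW - E2 W := Estar_eq_two_mul_E2_sub_E2 htwoW
    _ = 2 * (z ^ 2 * E2 Z - 6 * I * z / π)
        - ((2 * z) ^ 2 * E2 twoZ - 6 * I * (2 * z) / π) := by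
      rw [E2_neg_one_div (z := Z) (w := twoW) rfl, E2_neg_one_div (z := twoZ) (w := W) rfl]
    _ = -(2 * z ^ 2) * (2 * E2 twoZ - E2 Z) := by ring
    _ = -(2 * z ^ 2) * Estar Z := by rw [Estar_eq_two_mul_E2_sub_E2 (z := Z) (w := twoZ) rfl]

end EisensteinSeries

section EulerProduct

variable {q : ℂ}

/-- The Euler product `∏_{n ≥ 1} (1 - q ^ n)`, the factor of the eta function that is holomorphic in
the nome `q` on the unit disc. -/
def eulerProduct (q : ℂ) : ℂ := ∏' n : ℕ, (1 - q ^ (n + 1))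

lemma eulerProduct_zero : eulerProduct 0 = 1 := by simp [eulerProduct]

lemma eulerProduct_ne_zero (hq : ‖q‖ < 1) : eulerProduct q ≠ 0 := by
  have hsum : Summable fun n : ℕ ↦ ‖-q ^ (n + 1)‖ := by
    simpa only [norm_neg, norm_pow] using
      (summable_nat_add_iff 1).mpr (summable_geometric_of_lt_one (norm_nonneg q) hq)
  refine tprod_one_add_ne_zero_of_summable (f := fun n : ℕ ↦ -q ^ (n + 1)) (fun n hn ↦ ?_) hsum
  have hpow : ‖q ^ (n + 1)‖ < 1 := by
    rw [norm_pow]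
    exact pow_lt_one₀ (norm_nonneg q) hq n.succ_ne_zero
  rw [← sub_eq_add_neg, sub_eq_zero] at hn
  simp [← hn] at hpow

lemma differentiableOn_eulerProduct : DifferentiableOn ℂ eulerProduct (Metric.ball 0 1) :=
  ModularForm.differentiableOn_tprod_one_sub_pow

lemma differentiableOn_eulerProduct_sq :
    DifferentiableOn ℂ (fun q ↦ eulerProduct (q ^ 2)) (Metric.ball 0 1) :=
  differentiableOn_eulerProduct.comp (by fun_prop) fun _ hq ↦
    mem_ball_zero_iff.mpr (norm_sq_lt_one (mem_ball_zero_iff.mp hq))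

end EulerProduct

section EtaFunction

variable {z : ℂ}

lemma dedekindEta_eq_eta (z : ℂ) : dedekindEta z = ModularForm.eta z := by
  unfold dedekindEta ModularForm.eta ModularForm.eta_q nome Function.Periodic.qParam
  congr 2
  · push_cast
    ring
  · simp

lemma dedekindEta_ne_zero (hz : 0 < z.im) : dedekindEta z ≠ 0 := by
  rw [dedekindEta_eq_eta]
  exact ModularForm.eta_ne_zero hz

lemma sqrt_pow_eight (z : ℂ) : Complex.sqrt z ^ 8 = z ^ 4 := by
  rw [show 8 = 2 * 4 from rfl, pow_mul, Complex.sqrt, Complex.cpow_ofNat_inv_pow]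

lemma dedekindEta_neg_one_div_pow_eight (hz : 0 < z.im) :
    dedekindEta (-1 / z) ^ 8 = z ^ 4 * dedekindEta z ^ 8 := by
  have hη := ModularForm.eta_comp_eq_csqrt_I_inv hz
  simp only [Function.comp_apply, Pi.smul_apply, Pi.mul_apply, smul_eq_mul] at hη
  rw [dedekindEta_eq_eta, dedekindEta_eq_eta, hη, mul_pow, mul_pow, inv_pow, sqrt_pow_eight,
    sqrt_pow_eight, I_pow_four, inv_one, one_mul]

lemma dedekindEta_eq_mul_eulerProduct (z : ℂ) :
    dedekindEta z = Complex.exp (π * I * z / 12) * eulerProduct (nome z) := rfl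

lemma dedekindEta_two_mul_eq_mul_eulerProduct (z : ℂ) :
    dedekindEta (2 * z) = Complex.exp (π * I * z / 12) ^ 2 * eulerProduct (nome z ^ 2) := by
  rw [dedekindEta_eq_mul_eulerProduct, nome_two_mul, ← Complex.exp_nat_mul]
  push_cast
  ring_nf

lemma exp_pow_twentyFour_eq_nome (z : ℂ) : Complex.exp (π * I * z / 12) ^ 24 = nome z := by
  rw [nome, ← Complex.exp_nat_mul]
  push_cast
  ring_nf

end EtaFunction

section LevelOne

variable {f : ℂ → ℂ} {k : ℤ}

lemma slash_S_eq_of_map_neg_one_div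
    (hS : ∀ z : ℂ, 0 < z.im → f (-1 / z) = z ^ k * f z) :
    ((fun z : ℍ ↦ f z) ∣[k] ModularGroup.S) = fun z : ℍ ↦ f z := by
  ext z
  have hz : (z : ℂ) ^ k ≠ 0 := zpow_ne_zero _ z.ne_zero
  rw [SlashInvariantForm.slash_S_apply, coe_mk, inv_neg, ← one_div, ← neg_div, hS z z.im_pos,
    zpow_neg]
  field_simp

lemma slash_T_eq_of_map_add_one (hT : ∀ z : ℂ, 0 < z.im → f (z + 1) = f z) :
    ((fun z : ℍ ↦ f z) ∣[k] ModularGroup.T) = fun z : ℍ ↦ f z := by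
  ext z
  rw [ModularForm.SL_slash_apply, modular_T_smul, coe_vadd, ofReal_one, add_comm, hT z z.im_pos,
    ModularGroup.denom_apply]
  simp [ModularGroup.T]

/-- The modular form of level one attached to a holomorphic function on the upper half-plane that
transforms correctly under the generators `z ↦ z + 1` and `z ↦ -1 / z` and is bounded at `i∞`. The
function is given on all of `ℂ`; only its values on the upper half-plane matter. -/
def levelOneForm (hd : DifferentiableOn ℂ f upperHalfPlaneSet)
    (hT : ∀ z : ℂ, 0 < z.im → f (z + 1) = f z)
    (hS : ∀ z : ℂ, 0 < z.im → f (-1 / z) = z ^ k * f z)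
    (hb : IsBoundedAtImInfty fun z : ℍ ↦ f z) : ModularForm 𝒮ℒ k where
  toFun z := f z
  slash_action_eq' := by
    rintro _ ⟨γ, rfl⟩
    exact SlashInvariantForm.slash_action_generators_SL2Z (slash_S_eq_of_map_neg_one_div hS)
      (slash_T_eq_of_map_add_one hT) γ
  holo' := by
    rw [UpperHalfPlane.mdifferentiable_iff]
    exact hd.congr fun z hz ↦ congrArg (fun w : ℍ ↦ f w) (ofComplex_apply_of_im_pos hz)
  bdd_at_cusps' hc := by
    rw [Subgroup.IsArithmetic.isCusp_iff_isCusp_SL2Z] at hc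
    refine (OnePoint.isBoundedAt_iff_forall_SL2Z hc).mpr fun γ _ ↦ ?_
    rwa [SlashInvariantForm.slash_action_generators_SL2Z (slash_S_eq_of_map_neg_one_div hS)
      (slash_T_eq_of_map_add_one hT)]

lemma isBigO_nome_discriminant : (fun z : ℍ ↦ nome z) =O[atImInfty] ModularForm.discriminant := by
  refine IsBigO.of_norm_left ?_
  simpa only [norm_nome, coe_im] using ModularForm.exp_isBigO_discriminant

lemma isZeroAtImInfty_of_isBigO_nome_pow {g : ℍ → ℂ} {n : ℕ} (hn : n ≠ 0)
    (hg : g =O[atImInfty] fun z ↦ nome z ^ n) : IsZeroAtImInfty g := by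
  refine hg.trans_tendsto ?_
  simpa only [zero_pow hn, Function.comp_def] using (tendsto_nome.pow n).comp tendsto_coe_atImInfty

-- Descent: dividing by the discriminant lowers the weight by 12 and the order at `i∞` by 1.
lemma levelOne_eq_zero_of_isBigO_nome_pow {n : ℕ} (hk : k < 12 * n) (g : ModularForm 𝒮ℒ k)
    (hg : g =O[atImInfty] fun z ↦ nome z ^ n) : g = 0 := by
  induction n generalizing k with
  | zero =>
    exact DFunLike.coe_injective
      (ModularFormClass.levelOne_neg_weight_eq_zero (by simpa using hk) g)
  | succ n ih =>
    have hcoeff : (qExpansion 1 g).coeff 0 = 0 := by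
      rw [qExpansion_coeff_zero one_pos
        (ModularFormClass.analyticAt_cuspFunction_zero g one_pos one_mem_strictPeriods_SL)
        (SlashInvariantFormClass.periodic_comp_ofComplex g one_mem_strictPeriods_SL)]
      exact (isZeroAtImInfty_of_isBigO_nome_pow n.succ_ne_zero hg).valueAtInfty_eq_zero
    let cuspForm := ModularForm.toCuspForm g hcoeff
    have hquotient : CuspForm.discriminantEquiv cuspForm = 0 := by
      refine ih (by push_cast at hk; linarith) _ ?_
      have hinv : (fun z : ℍ ↦ (ModularForm.discriminant z)⁻¹) =O[atImInfty]
          fun z : ℍ ↦ (nome z)⁻¹ :=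
        isBigO_nome_discriminant.inv_rev <| .of_forall fun z h ↦ (nome_ne_zero z h).elim
      refine (hg.mul hinv).congr_right fun z ↦ ?_
      rw [pow_succ, mul_inv_cancel_right₀ (nome_ne_zero z)]
    have hcuspForm := (LinearEquiv.map_eq_zero_iff _).mp hquotient
    exact DFunLike.ext _ _ fun z ↦ DFunLike.congr_fun hcuspForm z

end LevelOne

section Fricke

/-- Modular forms of weight `2 * k` for `Γ₀(2)` extended by the Fricke involution
`z ↦ -1 / (2 * z)`, with no condition at the cusps. As for `levelOneForm`, only the values on
the upper half-plane matter. -/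
structure IsFrickeInvariant (k : ℤ) (F : ℂ → ℂ) : Prop where
  differentiableOn : DifferentiableOn ℂ F upperHalfPlaneSet
  map_add_one : ∀ z : ℂ, 0 < z.im → F (z + 1) = F z
  map_neg_one_div_two_mul : ∀ z : ℂ, 0 < z.im → F (-1 / (2 * z)) = (2 * z ^ 2) ^ k * F z

/-- The product of `F` over the three cosets of `Γ₀(2)` in `SL(2, ℤ)`, up to a constant factor: the
norm down to level one of a form invariant under the Fricke involution. -/
def levelOneNorm (F : ℂ → ℂ) (z : ℂ) : ℂ := F z * F (z / 2) * F ((z + 1) / 2)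

namespace IsFrickeInvariant

variable {k : ℤ} {F : ℂ → ℂ} {z : ℂ}

lemma map_neg_one_div (hF : IsFrickeInvariant k F) (hz : 0 < z.im) :
    F (-1 / z) = (z ^ 2 / 2) ^ k * F (z / 2) := by
  have h := hF.map_neg_one_div_two_mul (z / 2) (by simpa using hz)
  rw [mul_div_cancel₀ z two_ne_zero] at h
  rw [h]
  ring_nf

lemma map_neg_one_div_div_two (hF : IsFrickeInvariant k F) (hz : 0 < z.im) :
    F (-1 / z / 2) = (2 * z ^ 2) ^ k * F z := by
  rw [div_div, mul_comm z, hF.map_neg_one_div_two_mul z hz]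

-- On `(z + 1) / 2` the inversion `z ↦ -1 / z` acts as the product of two Fricke involutions,
-- separated by translations.
lemma map_neg_one_div_add_one_div_two (hF : IsFrickeInvariant k F) (hz : 0 < z.im) :
    F ((-1 / z + 1) / 2) = (z ^ 2) ^ k * F ((z + 1) / 2) := by
  set v := (z - 1) / 2 with hv_def
  set u := -1 / (2 * v) - 1 with hu_def
  have hv : 0 < v.im := by simpa [v] using hz
  have hu : 0 < u.im := by
    simpa only [u, sub_im, one_im, sub_zero] using
      im_neg_one_div_pos (z := 2 * v) (by simpa using hv)
  have hz₀ := ne_zero_of_im_pos hz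
  have hz₁ : z - 1 ≠ 0 := ne_zero_of_im_pos (by simpa using hz)
  have hu_eq : u = -z / (z - 1) := by
    rw [hu_def, hv_def]
    field_simp
    ring
  have huv : u * v = -z / 2 := by
    rw [hu_eq, hv_def]
    field_simp
  calc F ((-1 / z + 1) / 2) = F (-1 / (2 * u)) := by
        rw [hu_eq]
        congr 1
        field_simp
        ring
    _ = (2 * u ^ 2) ^ k * F (u + 1) := by
        rw [hF.map_neg_one_div_two_mul u hu, hF.map_add_one u hu]
    _ = (2 * u ^ 2) ^ k * ((2 * v ^ 2) ^ k * F (v + 1)) := by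
        rw [hu_def, sub_add_cancel, hF.map_neg_one_div_two_mul v hv, hF.map_add_one v hv]
    _ = (4 * (u * v) ^ 2) ^ k * F (v + 1) := by
        rw [← mul_assoc, ← mul_zpow]
        ring_nf
    _ = (z ^ 2) ^ k * F ((z + 1) / 2) := by
        rw [huv, hv_def]
        ring_nf

lemma levelOneNorm_neg_one_div (hF : IsFrickeInvariant k F) (hz : 0 < z.im) :
    levelOneNorm F (-1 / z) = z ^ (6 * k) * levelOneNorm F z := by
  have hfactor : (z ^ 2 / 2) ^ k * (2 * z ^ 2) ^ k * (z ^ 2) ^ k = z ^ (6 * k) := by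
    rw [← mul_zpow, ← mul_zpow, zpow_mul]
    congr 1
    norm_cast
    ring
  rw [levelOneNorm, hF.map_neg_one_div hz, hF.map_neg_one_div_div_two hz,
    hF.map_neg_one_div_add_one_div_two hz, ← hfactor, levelOneNorm]
  ring

lemma levelOneNorm_add_one (hF : IsFrickeInvariant k F) (hz : 0 < z.im) :
    levelOneNorm F (z + 1) = levelOneNorm F z := by
  have hshift : (z + 1 + 1) / 2 = z / 2 + 1 := by ring
  rw [levelOneNorm, levelOneNorm, hF.map_add_one z hz, hshift,
    hF.map_add_one (z / 2) (by simpa using hz)]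
  ring

lemma differentiableOn_comp_div_two (hF : IsFrickeInvariant k F) :
    DifferentiableOn ℂ (fun z ↦ F (z / 2)) upperHalfPlaneSet :=
  hF.differentiableOn.comp (by fun_prop) fun z hz ↦ by simpa using hz

lemma differentiableOn_comp_add_one_div_two (hF : IsFrickeInvariant k F) :
    DifferentiableOn ℂ (fun z ↦ F ((z + 1) / 2)) upperHalfPlaneSet :=
  hF.differentiableOn.comp (by fun_prop) fun z hz ↦ by simpa using hz

lemma differentiableOn_levelOneNorm (hF : IsFrickeInvariant k F) :
    DifferentiableOn ℂ (levelOneNorm F) upperHalfPlaneSet :=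
  (hF.differentiableOn.mul hF.differentiableOn_comp_div_two).mul
    hF.differentiableOn_comp_add_one_div_two

lemma eq_zero_of_levelOneNorm_eq_zero (hF : IsFrickeInvariant k F)
    (hN : ∀ z : ℂ, 0 < z.im → levelOneNorm F z = 0) (hz : 0 < z.im) : F z = 0 := by
  have analytic {g : ℂ → ℂ} (hg : DifferentiableOn ℂ g upperHalfPlaneSet) :=
    hg.analyticOnNhd isOpen_upperHalfPlaneSet
  have hconn := isPreconnected_upperHalfPlaneSet
  have analytic_F := analytic hF.differentiableOn
  have analytic_half := analytic hF.differentiableOn_comp_div_two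
  have analytic_half' := analytic hF.differentiableOn_comp_add_one_div_two
  rcases (analytic_F.mul analytic_half).eq_zero_or_eq_zero_of_mul_eq_zero analytic_half' hN hconn
    with h | h
  · rcases analytic_F.eq_zero_or_eq_zero_of_mul_eq_zero analytic_half h hconn with h | h
    · exact h z hz
    · simpa using h (2 * z) (by simpa using hz)
  · simpa using h (2 * z - 1) (by simpa using hz)

end IsFrickeInvariant

lemma levelOneNorm_isBigO_nome_pow {F : ℂ → ℂ} {m : ℕ}
    (hF : F =O[comap Complex.im atTop] fun z ↦ nome z ^ m) :
    levelOneNorm F =O[comap Complex.im atTop] fun z ↦ nome z ^ (2 * m) := by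
  have tendsto_half : Tendsto (fun z : ℂ ↦ z / 2) (comap Complex.im atTop)
      (comap Complex.im atTop) := by
    refine tendsto_comap_iff.mpr ?_
    simpa [Function.comp_def] using tendsto_comap.atTop_div_const (two_pos (α := ℝ))
  have tendsto_half' : Tendsto (fun z : ℂ ↦ (z + 1) / 2) (comap Complex.im atTop)
      (comap Complex.im atTop) := by
    refine tendsto_comap_iff.mpr ?_
    simpa [Function.comp_def] using tendsto_comap.atTop_div_const (two_pos (α := ℝ))
  have hmul := (hF.mul (hF.comp_tendsto tendsto_half)).mul (hF.comp_tendsto tendsto_half')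
  refine (hmul.norm_right.congr_right fun z ↦ ?_).of_norm_right
  rw [Function.comp_apply, Function.comp_apply, mul_assoc, ← mul_pow, ← mul_pow,
    nome_div_two_mul_nome_add_one_div_two, mul_neg, ← sq, norm_pow, norm_neg, ← norm_pow, ← pow_mul]

theorem IsFrickeInvariant.eq_zero_of_isBigO {k : ℤ} {F : ℂ → ℂ} {m : ℕ} {z : ℂ}
    (hF : IsFrickeInvariant k F) (hk : k < 4 * m)
    (hdecay : F =O[comap Complex.im atTop] fun z ↦ nome z ^ m) (hz : 0 < z.im) : F z = 0 := by
  have hN := (levelOneNorm_isBigO_nome_pow hdecay).comp_tendsto tendsto_coe_atImInfty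
  have hbdd : IsBoundedAtImInfty fun z : ℍ ↦ levelOneNorm F z :=
    hN.trans (((tendsto_nome.pow (2 * m)).comp tendsto_coe_atImInfty).isBigO_one ℝ)
  let N : ModularForm 𝒮ℒ (6 * k) := levelOneForm hF.differentiableOn_levelOneNorm
    (fun _ ↦ hF.levelOneNorm_add_one) (fun _ ↦ hF.levelOneNorm_neg_one_div) hbdd
  have hN₀ : N = 0 := levelOne_eq_zero_of_isBigO_nome_pow (by push_cast; linarith) N hN
  exact hF.eq_zero_of_levelOneNorm_eq_zero (fun w hw ↦ DFunLike.congr_fun hN₀ ⟨w, hw⟩) hz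

end Fricke

section EisensteinEtaIdentity

variable {z : ℂ}

/-- The difference between the two sides of `Estar_sq`. -/
def estarSqDefect (z : ℂ) : ℂ :=
  Estar z ^ 2 - (dedekindEta z ^ 16 / dedekindEta (2 * z) ^ 8 +
    64 * (dedekindEta (2 * z) ^ 16 / dedekindEta z ^ 8))

/-- `estarSqDefect` as a function of the nome. -/
def estarSqDefectSeries (q : ℂ) : ℂ :=
  (1 + 24 * ∑' n, (sigmaOdd n : ℂ) * q ^ n) ^ 2 -
    (eulerProduct q ^ 16 / eulerProduct (q ^ 2) ^ 8 +
      64 * (q * eulerProduct (q ^ 2) ^ 16 / eulerProduct q ^ 8))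

lemma estarSqDefectSeries_zero : estarSqDefectSeries 0 = 0 := by
  have htsum : ∑' n, (sigmaOdd n : ℂ) * 0 ^ n = 0 := by
    rw [tsum_eq_single 0 fun n hn ↦ by rw [zero_pow hn, mul_zero]]
    simp [sigmaOdd]
  simp [estarSqDefectSeries, htsum, eulerProduct_zero]

lemma differentiableOn_estarSqDefectSeries :
    DifferentiableOn ℂ estarSqDefectSeries (Metric.ball 0 1) := by
  have hE := ((differentiableOn_tsum_mul_pow norm_sigmaOdd_le).const_mul 24).const_add 1
  have hP := differentiableOn_eulerProduct
  have hP_sq := differentiableOn_eulerProduct_sq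
  have hP₀ (q) (hq : q ∈ Metric.ball (0 : ℂ) 1) : eulerProduct q ^ 8 ≠ 0 :=
    pow_ne_zero 8 (eulerProduct_ne_zero (mem_ball_zero_iff.mp hq))
  have hP_sq₀ (q) (hq : q ∈ Metric.ball (0 : ℂ) 1) : eulerProduct (q ^ 2) ^ 8 ≠ 0 :=
    pow_ne_zero 8 (eulerProduct_ne_zero (norm_sq_lt_one (mem_ball_zero_iff.mp hq)))
  exact (hE.pow 2).sub (((hP.pow 16).div (hP_sq.pow 8) hP_sq₀).add
    (((differentiableOn_id.mul (hP_sq.pow 16)).div (hP.pow 8) hP₀).const_mul 64))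

lemma estarSqDefect_eq_estarSqDefectSeries (z : ℂ) :
    estarSqDefect z = estarSqDefectSeries (nome z) := by
  have hexp := Complex.exp_ne_zero (π * I * z / 12)
  have quotient : dedekindEta z ^ 16 / dedekindEta (2 * z) ^ 8 =
      eulerProduct (nome z) ^ 16 / eulerProduct (nome z ^ 2) ^ 8 := by
    rw [dedekindEta_eq_mul_eulerProduct, dedekindEta_two_mul_eq_mul_eulerProduct, mul_pow, mul_pow,
      ← pow_mul, mul_div_mul_left _ _ (pow_ne_zero 16 hexp)]
  have quotient_two : dedekindEta (2 * z) ^ 16 / dedekindEta z ^ 8 =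
      nome z * eulerProduct (nome z ^ 2) ^ 16 / eulerProduct (nome z) ^ 8 := by
    rw [dedekindEta_two_mul_eq_mul_eulerProduct, dedekindEta_eq_mul_eulerProduct, mul_pow, mul_pow,
      ← pow_mul, show 2 * 16 = 8 + 24 by norm_num, pow_add, mul_assoc,
      mul_div_mul_left _ _ (pow_ne_zero 8 hexp), exp_pow_twentyFour_eq_nome]
  rw [estarSqDefect, estarSqDefectSeries, Estar_eq_tsum_nome, quotient, quotient_two]

lemma estarSqDefect_neg_one_div_two_mul (hz : 0 < z.im) :
    estarSqDefect (-1 / (2 * z)) = (2 * z ^ 2) ^ 2 * estarSqDefect z := by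
  have hz₂ : 0 < (2 * z).im := by simpa using hz
  have hz₀ := ne_zero_of_im_pos hz
  have hη := dedekindEta_ne_zero hz
  have hη₂ := dedekindEta_ne_zero hz₂
  have two_mul_inv : 2 * (-1 / (2 * z)) = -1 / z := by field_simp
  have pow_sixteen (w : ℂ) : w ^ 16 = (w ^ 8) ^ 2 := (pow_mul w 8 2)
  simp only [estarSqDefect, two_mul_inv, pow_sixteen, Estar_neg_one_div_two_mul hz,
    dedekindEta_neg_one_div_pow_eight hz, dedekindEta_neg_one_div_pow_eight hz₂]
  field_simp
  ring

lemma isFrickeInvariant_estarSqDefect : IsFrickeInvariant 2 estarSqDefect where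
  differentiableOn :=
    (differentiableOn_comp_nome differentiableOn_estarSqDefectSeries).congr fun z _ ↦
      estarSqDefect_eq_estarSqDefectSeries z
  map_add_one z _ := by
    rw [estarSqDefect_eq_estarSqDefectSeries, estarSqDefect_eq_estarSqDefectSeries, nome_add_one]
  map_neg_one_div_two_mul _ hz := estarSqDefect_neg_one_div_two_mul hz

lemma estarSqDefect_isBigO_nome : estarSqDefect =O[comap Complex.im atTop] nome := by
  rw [funext estarSqDefect_eq_estarSqDefectSeries]
  exact isBigO_comp_nome (differentiableOn_estarSqDefectSeries.differentiableAt
    (Metric.ball_mem_nhds 0 one_pos)) estarSqDefectSeries_zero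

theorem Estar_sq (hz : 0 < z.im) :
    Estar z ^ 2 = dedekindEta z ^ 16 / dedekindEta (2 * z) ^ 8 +
      64 * (dedekindEta (2 * z) ^ 16 / dedekindEta z ^ 8) := by
  refine sub_eq_zero.mp (isFrickeInvariant_estarSqDefect.eq_zero_of_isBigO (m := 1) (by norm_num)
    ?_ hz)
  simpa only [pow_one] using estarSqDefect_isBigO_nome

end EisensteinEtaIdentity

/-- For `τ ∈ ℍ`: `Δ(2τ)/Δ(4τ) = h(τ)² − 64`, where `Δ = η²⁴`. -/
theorem stmt11 (τ : ℂ) (hτ : 0 < τ.im) :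
    dedekindEta (2 * τ) ^ 24 / dedekindEta (4 * τ) ^ 24 = hfun τ ^ 2 - 64 := by
  have h2τ : 0 < (2 * τ).im := by simpa using hτ
  have h4τ : 0 < (4 * τ).im := by simpa using hτ
  have hη2 := dedekindEta_ne_zero h2τ
  have hη4 := dedekindEta_ne_zero h4τ
  rw [hfun, mul_pow, Estar_sq h2τ, ← mul_assoc, show (2 : ℂ) * 2 = 4 by norm_num]
  generalize dedekindEta (2 * τ) = a at hη2 ⊢
  generalize dedekindEta (4 * τ) = b at hη4 ⊢
  field_simp
  ring
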